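/- arXiv:2301.12480 — 2 statements merged into one kernel-verified Lean document; each statement's English description precedes it below -/
import Mathlib

section
/- Let μ ∈ ℝ and σ > 0, and define f : ℝ → [0,1] by f(x) = max{ (4/9)(1 + z₊²)^{-1}, (4/3)(1 + z₊²)^{-1} − 1/3 } where z = (x−μ)/σ and z₊ = max(z,0). Then for every unimodal Borel probability measure Q on ℝ with finite second moment, mean ≤ μ and variance ≤ σ², and for every α ∈ (0,1), Q({x : f(x) ≤ α}) ≤ α. That is, f = max{(4/9)P₀, (4P₀−1)/3} with P₀(x) = (1+z₊²)^{-1} is a p-variable for H_U(μ,σ). -/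
open MeasureTheory Set
open scoped ENNReal

/-- Mean of a distribution on ℝ. -/
noncomputable def distMean (Q : Measure ℝ) : ℝ := ∫ x, x ∂Q

/-- Variance of a distribution on ℝ. -/
noncomputable def distVar (Q : Measure ℝ) : ℝ := ∫ x, (x - distMean Q)^2 ∂Q

/-- `H(μ,σ)`: Borel probability measures on ℝ with finite second moment,
mean at most `μ`, and variance at most `σ²`. -/
def MemH (μ σ : ℝ) (Q : Measure ℝ) : Prop :=
  IsProbabilityMeasure Q ∧ Integrable (fun x => x^2) Q ∧
    distMean Q ≤ μ ∧ distVar Q ≤ σ^2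

/-- A distribution on ℝ is unimodal: for some `x₀` it is a nonnegative multiple of
the Dirac mass at `x₀` plus a measure with a Lebesgue density that is nondecreasing
on `(-∞, x₀)` and nonincreasing on `(x₀, ∞)`. -/
def Unimodal (Q : Measure ℝ) : Prop :=
  ∃ (x₀ : ℝ) (c : ℝ≥0∞) (f : ℝ → ℝ≥0∞),
    Q = c • Measure.dirac x₀ + volume.withDensity f ∧
    MonotoneOn f (Iio x₀) ∧ AntitoneOn f (Ioi x₀)

/-- `f = max{(4/9)P₀, (4P₀−1)/3}` with `P₀(x) = (1 + (((x−μ)/σ)₊)²)⁻¹`. -/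
noncomputable def pU (μ σ : ℝ) (x : ℝ) : ℝ :=
  max ((4/9) * (1 + (max ((x - μ) / σ) 0)^2)⁻¹)
    ((4/3) * (1 + (max ((x - μ) / σ) 0)^2)⁻¹ - 1/3)

/-!
The superlevel sets of a density that is unimodal about `m` are, up to the point `m`, intervals
containing `m`. By the layer cake formula, `∫ φ dQ ≤ ∫ ψ dQ` for such a `Q` as soon as `φ m ≤ ψ m`
and `∫ x in u..v, φ x ≤ ∫ x in u..v, ψ x` whenever `u ≤ m ≤ v`.

With the mode measured from a centre `a`, and `c` the mode clamped to `[0, r]`, this applies to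
`φ = c² + (9r² - 6c²) 1_{[r, ∞)}` and `ψ = 4x²`, and bounds `(9r² - 6c²) Q[a + r, ∞)` by
`4 ∫ (x - a)² dQ - c²`. For `∫ (x - a)² dQ ≤ τ r²` the resulting bound on the tail is a convex
combination of `4τ/9` and `(4τ - 1)/3`, whatever `c` is. Cantelli's choice of `a` makes
`τ = (1 + t²)⁻¹` for the tail beyond `t` standard deviations above the mean.
-/

section ComparisonPrinciple

theorem innerRegular_of_sFinite {α : Type*} [TopologicalSpace α] [SecondCountableTopology α]
    [TopologicalSpace.IsCompletelyPseudoMetrizableSpace α] [MeasurableSpace α] [BorelSpace α]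
    (ν : Measure α) [SFinite ν] : ν.InnerRegular := by
  rw [← sum_sfiniteSeq ν]
  infer_instance

theorem ordConnected_insert_setOf_lt {α β : Type*} [LinearOrder α] [Preorder β] {f : α → β}
    {m : α} (hmono : MonotoneOn f (Iio m)) (hanti : AntitoneOn f (Ioi m)) (t : β) :
    (insert m {x | t < f x}).OrdConnected := by
  refine ⟨fun x hx y hy z hz => ?_⟩
  rcases lt_trichotomy z m with hzm | rfl | hmz
  · have hxm := hz.1.trans_lt hzm
    exact Or.inr ((hx.resolve_left hxm.ne).trans_le (hmono hxm hzm hz.1))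
  · exact mem_insert z _
  · have hmy := hmz.trans_le hz.2
    exact Or.inr ((hy.resolve_left hmy.ne').trans_le (hanti hmz hmy hz.2))

theorem measurable_of_monotoneOn_Iio_of_antitoneOn_Ioi {α β : Type*} [LinearOrder α]
    [TopologicalSpace α] [OrderTopology α] [SecondCountableTopology α] [MeasurableSpace α]
    [BorelSpace α] [LinearOrder β] [TopologicalSpace β] [OrderTopology β]
    [SecondCountableTopology β] [MeasurableSpace β] [BorelSpace β] {f : α → β} {m : α}
    (hmono : MonotoneOn f (Iio m)) (hanti : AntitoneOn f (Ioi m)) : Measurable f := by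
  refine measurable_of_Ioi fun t => ?_
  have hS := (ordConnected_insert_setOf_lt hmono hanti t).measurableSet
  by_cases hm : m ∈ {x | t < f x}
  · rwa [insert_eq_of_mem hm] at hS
  · have hdiff := hS.diff (measurableSet_singleton m)
    rwa [insert_sdiff_self_of_notMem hm] at hdiff

theorem measure_le_of_ordConnected {α : Type*} [LinearOrder α] [TopologicalSpace α]
    [OrderTopology α] [SecondCountableTopology α] [MeasurableSpace α] [BorelSpace α]
    {ν₁ ν₂ : Measure α} [ν₁.InnerRegular] {m : α}
    (hν : ∀ u ≤ m, ∀ v ≥ m, ν₁ (Icc u v) ≤ ν₂ (Icc u v))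
    {S : Set α} (hS : S.OrdConnected) (hm : m ∈ S) : ν₁ S ≤ ν₂ S := by
  rw [hS.measurableSet.measure_eq_iSup_isCompact ν₁]
  refine iSup₂_le fun K hKS => iSup_le fun hK => ?_
  have hK' : IsCompact (insert m K) := hK.insert m
  obtain ⟨u, huK, hu⟩ := hK'.exists_isLeast (insert_nonempty m K)
  obtain ⟨v, hvK, hv⟩ := hK'.exists_isGreatest (insert_nonempty m K)
  have hsub : insert m K ⊆ S := insert_subset hm hKS
  calc ν₁ K ≤ ν₁ (Icc u v) :=
        measure_mono fun x hx => ⟨hu (mem_insert_of_mem m hx), hv (mem_insert_of_mem m hx)⟩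
    _ ≤ ν₂ (Icc u v) := hν u (hu (mem_insert m K)) v (hv (mem_insert m K))
    _ ≤ ν₂ S := measure_mono (hS.out (hsub huK) (hsub hvK))

theorem lintegral_le_lintegral_of_measure_setOf_lt_le {α : Type*} [MeasurableSpace α]
    {ν₁ ν₂ : Measure α} {f : α → ℝ≥0∞} (hf : Measurable f)
    (hν : ∀ t, ν₁ {x | t < f x} ≤ ν₂ {x | t < f x}) : ∫⁻ x, f x ∂ν₁ ≤ ∫⁻ x, f x ∂ν₂ := by
  have layercake (ν : Measure α) (n : ℕ) :
      ∫⁻ x, min (f x) n ∂ν = ∫⁻ t in Ioi 0, ν {x | ENNReal.ofReal t < min (f x) n} := by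
    have hfin (x : α) : min (f x) n ≠ ∞ := ((min_le_right _ _).trans_lt (by simp)).ne
    have h := lintegral_eq_lintegral_meas_lt ν (f := fun x => (min (f x) n).toReal)
      (.of_forall fun _ => ENNReal.toReal_nonneg) (by fun_prop)
    simp only [ENNReal.ofReal_toReal (hfin _)] at h
    rw [h]
    refine setLIntegral_congr_fun measurableSet_Ioi fun t ht => ?_
    simp only [ENNReal.ofReal_lt_iff_lt_toReal (le_of_lt ht) (hfin _)]
  have truncation (ν : Measure α) : ∫⁻ x, f x ∂ν = ⨆ n : ℕ, ∫⁻ x, min (f x) n ∂ν := by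
    rw [← lintegral_iSup (fun n => hf.min measurable_const)
      fun i j hij x => min_le_min_left _ (Nat.cast_le.2 hij)]
    simp only [← inf_iSup_eq, ENNReal.iSup_natCast, le_top, inf_of_le_left]
  rw [truncation, truncation]
  refine iSup_mono fun n => ?_
  rw [layercake, layercake]
  refine lintegral_mono fun t => ?_
  by_cases ht : ENNReal.ofReal t < n
  · simpa only [lt_min_iff, ht, and_true] using hν (ENNReal.ofReal t)
  · simp only [lt_min_iff, ht, and_false, ofPred_false, measure_empty, le_refl]

theorem lintegral_le_lintegral_of_unimodal {α : Type*} [LinearOrder α] [TopologicalSpace α]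
    [OrderTopology α] [SecondCountableTopology α]
    [TopologicalSpace.IsCompletelyPseudoMetrizableSpace α] [MeasurableSpace α] [BorelSpace α]
    {ρ : Measure α} [SFinite ρ] [NullSingletonClass ρ] {m : α} {w : ℝ≥0∞} {f : α → ℝ≥0∞}
    (hmono : MonotoneOn f (Iio m)) (hanti : AntitoneOn f (Ioi m)) {g h : α → ℝ≥0∞}
    (hg : Measurable g) (hh : Measurable h) (hm : g m ≤ h m)
    (hgh : ∀ u ≤ m, ∀ v ≥ m, ∫⁻ x in Icc u v, g x ∂ρ ≤ ∫⁻ x in Icc u v, h x ∂ρ) :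
    ∫⁻ x, g x ∂(w • Measure.dirac m + ρ.withDensity f) ≤
      ∫⁻ x, h x ∂(w • Measure.dirac m + ρ.withDensity f) := by
  have hf := measurable_of_monotoneOn_Iio_of_antitoneOn_Ioi hmono hanti
  have swap {k : α → ℝ≥0∞} (hk : Measurable k) :
      ∫⁻ x, k x ∂ρ.withDensity f = ∫⁻ x, f x ∂ρ.withDensity k := by
    rw [lintegral_withDensity_eq_lintegral_mul _ hf hk,
      lintegral_withDensity_eq_lintegral_mul _ hk hf, mul_comm]
  have := innerRegular_of_sFinite (ρ.withDensity g)
  have hsuper (t : ℝ≥0∞) : ρ.withDensity g {x | t < f x} ≤ ρ.withDensity h {x | t < f x} :=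
    calc ρ.withDensity g {x | t < f x}
        ≤ ρ.withDensity g (insert m {x | t < f x}) := measure_mono (subset_insert _ _)
      _ ≤ ρ.withDensity h (insert m {x | t < f x}) :=
          measure_le_of_ordConnected
            (fun u hu v hv => by
              simpa only [withDensity_apply _ measurableSet_Icc] using hgh u hu v hv)
            (ordConnected_insert_setOf_lt hmono hanti t) (mem_insert _ _)
      _ = ρ.withDensity h {x | t < f x} :=
          measure_congr ((withDensity_absolutelyContinuous ρ h).ae_eq (insert_ae_eq_self m _))
  rw [lintegral_add_measure, lintegral_add_measure, lintegral_smul_measure,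
    lintegral_smul_measure, lintegral_dirac' _ hg, lintegral_dirac' _ hh, swap hg, swap hh]
  gcongr ?_ + ?_
  · exact mul_le_mul_right hm w
  · exact lintegral_le_lintegral_of_measure_setOf_lt_le hf hsuper

theorem integral_le_integral_of_unimodal {ρ : Measure ℝ} [SFinite ρ] [NullSingletonClass ρ]
    {m : ℝ} {w : ℝ≥0∞} {f : ℝ → ℝ≥0∞} (hmono : MonotoneOn f (Iio m))
    (hanti : AntitoneOn f (Ioi m)) {φ ψ : ℝ → ℝ} (hφ0 : ∀ x, 0 ≤ φ x) (hψ0 : ∀ x, 0 ≤ ψ x)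
    (hφmeas : Measurable φ) (hψmeas : Measurable ψ)
    (hφ : ∀ u v, IntervalIntegrable φ ρ u v) (hψ : ∀ u v, IntervalIntegrable ψ ρ u v)
    (hψint : Integrable ψ (w • Measure.dirac m + ρ.withDensity f)) (hm : φ m ≤ ψ m)
    (hφψ : ∀ u ≤ m, ∀ v ≥ m, ∫ x in u..v, φ x ∂ρ ≤ ∫ x in u..v, ψ x ∂ρ) :
    ∫ x, φ x ∂(w • Measure.dirac m + ρ.withDensity f) ≤
      ∫ x, ψ x ∂(w • Measure.dirac m + ρ.withDensity f) := by
  have setLIntegral_Icc {k : ℝ → ℝ} (hk0 : ∀ x, 0 ≤ k x)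
      (hk : ∀ u v, IntervalIntegrable k ρ u v) {u v : ℝ} (huv : u ≤ v) :
      ∫⁻ x in Icc u v, ENNReal.ofReal (k x) ∂ρ = ENNReal.ofReal (∫ x in u..v, k x ∂ρ) := by
    rw [intervalIntegral.integral_of_le huv, setLIntegral_congr Ioc_ae_eq_Icc.symm,
      ofReal_integral_eq_lintegral_ofReal (hk u v).1 (.of_forall hk0)]
  rw [integral_eq_lintegral_of_nonneg_ae (.of_forall hφ0) hφmeas.aestronglyMeasurable,
    integral_eq_lintegral_of_nonneg_ae (.of_forall hψ0) hψmeas.aestronglyMeasurable]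
  refine ENNReal.toReal_mono hψint.lintegral_lt_top.ne
    (lintegral_le_lintegral_of_unimodal hmono hanti hφmeas.ennreal_ofReal hψmeas.ennreal_ofReal
      (ENNReal.ofReal_le_ofReal hm) fun u hu v hv => ?_)
  rw [setLIntegral_Icc hφ0 hφ (hu.trans hv), setLIntegral_Icc hψ0 hψ (hu.trans hv)]
  exact ENNReal.ofReal_le_ofReal (hφψ u hu v hv)

end ComparisonPrinciple

section DualStep

/-- The dual certificate for bounding the mass of `[r, ∞)` by the second moment, to be compared with
`4x²`: a step function with the single jump `9r² - 6c²` at `r`, where `c ∈ [0, r]` stands for the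
mode. The jump is affine in `c²` and is the largest possible one for `c = 0` and for `c = r`. -/
noncomputable def dualStep (r c x : ℝ) : ℝ :=
  c ^ 2 + (Ici r).indicator (fun _ => 3 * (3 * r ^ 2 - 2 * c ^ 2)) x

theorem dualStep_of_lt {r x : ℝ} (hx : x < r) (c : ℝ) : dualStep r c x = c ^ 2 := by
  rw [dualStep, indicator_of_notMem (notMem_Ici.2 hx), add_zero]

theorem jump_dualStep_pos {r c : ℝ} (hr : 0 < r) (hc : c ∈ Icc 0 r) :
    0 < 3 * (3 * r ^ 2 - 2 * c ^ 2) := by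
  nlinarith [pow_le_pow_left₀ hc.1 hc.2 2]

theorem dualStep_nonneg {r c : ℝ} (hr : 0 < r) (hc : c ∈ Icc 0 r) (x : ℝ) : 0 ≤ dualStep r c x :=
  add_nonneg (sq_nonneg c) (indicator_nonneg (fun _ _ => (jump_dualStep_pos hr hc).le) x)

theorem measurable_dualStep (r c : ℝ) : Measurable (dualStep r c) :=
  measurable_const.add (measurable_const.indicator measurableSet_Ici)

theorem integrable_dualStep (r c : ℝ) (ν : Measure ℝ) [IsFiniteMeasure ν] :
    Integrable (dualStep r c) ν :=
  (integrable_const _).add ((integrable_const _).indicator measurableSet_Ici)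

theorem intervalIntegrable_dualStep (r c u v : ℝ) :
    IntervalIntegrable (dualStep r c) volume u v :=
  ⟨integrable_dualStep r c _, integrable_dualStep r c _⟩

theorem integral_dualStep (r c : ℝ) (ν : Measure ℝ) [IsFiniteMeasure ν] :
    ∫ x, dualStep r c x ∂ν =
      c ^ 2 * ν.real univ + 3 * (3 * r ^ 2 - 2 * c ^ 2) * ν.real (Ici r) := by
  unfold dualStep
  rw [integral_add (integrable_const _) ((integrable_const _).indicator measurableSet_Ici),
    integral_const, integral_indicator_const _ measurableSet_Ici, smul_eq_mul, smul_eq_mul,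
    mul_comm, mul_comm (ν.real (Ici r))]

theorem integral_dualStep_sub (r c a : ℝ) (ν : Measure ℝ) [IsFiniteMeasure ν] :
    ∫ x, dualStep r c (x - a) ∂ν =
      c ^ 2 * ν.real univ + 3 * (3 * r ^ 2 - 2 * c ^ 2) * ν.real (Ici (a + r)) := by
  have hsub : Measurable fun x : ℝ => x - a := measurable_sub_const a
  rw [← integral_map hsub.aemeasurable (measurable_dualStep r c).aestronglyMeasurable,
    integral_dualStep, map_measureReal_apply hsub .univ,
    map_measureReal_apply hsub measurableSet_Ici, preimage_univ, preimage_sub_const_Ici,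
    add_comm r]

theorem intervalIntegral_dualStep (r c : ℝ) {u v : ℝ} (huv : u ≤ v) :
    ∫ x in u..v, dualStep r c x =
      c ^ 2 * (v - u) + 3 * (3 * r ^ 2 - 2 * c ^ 2) * max (v - max r u) 0 := by
  rw [intervalIntegral.integral_of_le huv, ← integral_Icc_eq_integral_Ioc, integral_dualStep,
    measureReal_restrict_apply_univ, measureReal_restrict_apply measurableSet_Ici,
    ← Ici_inter_Iic, ← inter_assoc, Ici_inter_Ici, Ici_inter_Iic, Ici_inter_Iic,
    Real.volume_real_Icc_of_le huv, Real.volume_real_Icc]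

theorem integral_four_mul_sq (u v : ℝ) : ∫ x in u..v, 4 * x ^ 2 = 4 / 3 * (v ^ 3 - u ^ 3) := by
  rw [intervalIntegral.integral_const_mul, integral_pow]
  push_cast
  ring

theorem line_le_cubic_of_le {c r v : ℝ} (hc : 0 ≤ c) (hcr : c ≤ r) (hrv : r ≤ v) :
    9 * (3 * r ^ 2 - 2 * c ^ 2) * (v - r) ≤ (2 * v + c) ^ 2 * (v - c) := by
  rw [← sub_nonneg]
  rcases le_total v (3 * r / 2) with hv | hv
  · -- `(3r - c) / 2` interpolates the points of tangency `3r / 2` for `c = 0` and `r` for `c = r`.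
    have hsplit : (2 * v + c) ^ 2 * (v - c) - 9 * (3 * r ^ 2 - 2 * c ^ 2) * (v - r) =
        (2 * v - (3 * r - c)) ^ 2 * (v + (3 * r - c)) + 9 * c * (r - c) * (3 * r - 2 * v) := by
      ring
    rw [hsplit]
    refine add_nonneg (mul_nonneg (sq_nonneg _) (by linarith)) (mul_nonneg ?_ (by linarith))
    exact mul_nonneg (by linarith) (sub_nonneg.2 hcr)
  · obtain ⟨w, rfl⟩ : ∃ w, v = 3 * r / 2 + w := ⟨v - 3 * r / 2, by ring⟩
    have hr : 0 ≤ r := hc.trans hcr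
    have hw : 0 ≤ w := by linarith
    have hexpand : (2 * (3 * r / 2 + w) + c) ^ 2 * (3 * r / 2 + w - c)
        - 9 * (3 * r ^ 2 - 2 * c ^ 2) * (3 * r / 2 + w - r) =
        c ^ 2 * (9 / 2 * r - c) + (15 * c ^ 2 * w + 18 * r * w ^ 2 + 4 * w ^ 3) := by ring
    rw [hexpand]
    exact add_nonneg (mul_nonneg (sq_nonneg c) (by linarith)) (by positivity)

theorem integral_dualStep_le_of_mem_Icc {r c u v : ℝ} (hc : c ∈ Icc 0 r) (hu : u ≤ c)
    (hv : c ≤ v) : ∫ x in u..v, dualStep r c x ≤ ∫ x in u..v, 4 * x ^ 2 := by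
  -- Up to a constant, `(2x + c)² (x - c) / 3` is the primitive of `4x² - c²`.
  have hleft : (2 * u + c) ^ 2 * (u - c) ≤ 0 :=
    mul_nonpos_of_nonneg_of_nonpos (sq_nonneg _) (sub_nonpos.2 hu)
  rw [intervalIntegral_dualStep r c (hu.trans hv), integral_four_mul_sq,
    max_eq_left (hu.trans hc.2)]
  rcases le_total v r with hvr | hrv
  · have hright : 0 ≤ (2 * v + c) ^ 2 * (v - c) := mul_nonneg (sq_nonneg _) (sub_nonneg.2 hv)
    rw [max_eq_right (sub_nonpos.2 hvr)]
    linarith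
  · have hright := line_le_cubic_of_le hc.1 hc.2 hrv
    rw [max_eq_left (sub_nonneg.2 hrv)]
    linarith

theorem dualStep_zero_le {r x : ℝ} (hxr : x < r) : dualStep r 0 x ≤ 4 * x ^ 2 := by
  rw [dualStep_of_lt hxr]
  nlinarith

theorem dualStep_self_le {r x : ℝ} (hr : 0 ≤ r) (hrx : r ≤ x) : dualStep r r x ≤ 4 * x ^ 2 := by
  rw [dualStep, indicator_of_mem (mem_Ici.2 hrx)]
  nlinarith

theorem exists_dualStep_le (m : ℝ) {r : ℝ} (hr : 0 < r) :
    ∃ c ∈ Icc 0 r, dualStep r c m ≤ 4 * m ^ 2 ∧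
      ∀ u ≤ m, ∀ v ≥ m, ∫ x in u..v, dualStep r c x ≤ ∫ x in u..v, 4 * x ^ 2 := by
  have mono_of_le {c u v : ℝ} (huv : u ≤ v) (h : ∀ x ∈ Icc u v, dualStep r c x ≤ 4 * x ^ 2) :
      ∫ x in u..v, dualStep r c x ≤ ∫ x in u..v, 4 * x ^ 2 :=
    intervalIntegral.integral_mono_on huv
      (intervalIntegrable_dualStep r c u v) (Continuous.intervalIntegrable (by fun_prop) u v) h
  rcases lt_or_ge m 0 with hm0 | hm0
  · have h0 : (0 : ℝ) ∈ Icc 0 r := left_mem_Icc.2 hr.le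
    refine ⟨0, h0, dualStep_zero_le (hm0.trans hr), fun u hu v hv => ?_⟩
    rcases le_total 0 v with hv0 | hv0
    · exact integral_dualStep_le_of_mem_Icc h0 (hu.trans hm0.le) hv0
    · exact mono_of_le (hu.trans hv) fun x hx =>
        dualStep_zero_le ((hx.2.trans hv0).trans_lt hr)
  rcases lt_or_ge m r with hmr | hrm
  · refine ⟨m, ⟨hm0, hmr.le⟩, ?_,
      fun u hu v hv => integral_dualStep_le_of_mem_Icc ⟨hm0, hmr.le⟩ hu hv⟩
    rw [dualStep_of_lt hmr]
    nlinarith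
  · have hrr : r ∈ Icc 0 r := right_mem_Icc.2 hr.le
    refine ⟨r, hrr, dualStep_self_le hr.le hrm, fun u hu v hv => ?_⟩
    rcases le_total u r with hur | hru
    · exact integral_dualStep_le_of_mem_Icc hrr hur (hrm.trans hv)
    · exact mono_of_le (hu.trans hv) fun x hx => dualStep_self_le hr.le (hru.trans hx.1)

end DualStep

section TailBound

theorem Unimodal.exists_add_mul_measureReal_Ici_le {Q : Measure ℝ} [IsProbabilityMeasure Q]
    (hU : Unimodal Q) (hQ : MemLp id 2 Q) (a : ℝ) {r : ℝ} (hr : 0 < r) :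
    ∃ c ∈ Icc 0 r,
      c ^ 2 + 3 * (3 * r ^ 2 - 2 * c ^ 2) * Q.real (Ici (a + r)) ≤ 4 * ∫ x, (x - a) ^ 2 ∂Q := by
  obtain ⟨m, w, f, hQf, hmono, hanti⟩ := hU
  obtain ⟨c, hc, hmode, hinterval⟩ := exists_dualStep_le (m - a) hr
  refine ⟨c, hc, ?_⟩
  have hψ : Integrable (fun x => 4 * (x - a) ^ 2) Q :=
    (hQ.sub (memLp_const a)).integrable_sq.const_mul 4
  have hcompare : ∫ x, dualStep r c (x - a) ∂Q ≤ ∫ x, 4 * (x - a) ^ 2 ∂Q := by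
    rw [hQf] at hψ ⊢
    refine integral_le_integral_of_unimodal hmono hanti
      (fun x => dualStep_nonneg hr hc _) (fun x => by positivity)
      ((measurable_dualStep r c).comp (measurable_sub_const a)) (by fun_prop)
      (fun u v => by
        simpa only [sub_add_cancel] using
          (intervalIntegrable_dualStep r c (u - a) (v - a)).comp_sub_right a)
      (fun u v => Continuous.intervalIntegrable (by fun_prop) u v) hψ hmode
      fun u hu v hv => ?_
    rw [intervalIntegral.integral_comp_sub_right (dualStep r c) a,
      intervalIntegral.integral_comp_sub_right (fun x => 4 * x ^ 2) a]
    exact hinterval _ (sub_le_sub_right hu a) _ (sub_le_sub_right hv a)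
  rwa [integral_dualStep_sub, integral_const_mul, probReal_univ, mul_one] at hcompare

theorem Unimodal.measureReal_Ici_le {Q : Measure ℝ} [IsProbabilityMeasure Q] (hU : Unimodal Q)
    (hQ : MemLp id 2 Q) (a : ℝ) {r τ : ℝ} (hr : 0 < r) (hτ : ∫ x, (x - a) ^ 2 ∂Q ≤ τ * r ^ 2) :
    Q.real (Ici (a + r)) ≤ max (4 / 9 * τ) (4 / 3 * τ - 1 / 3) := by
  obtain ⟨c, ⟨hc0, hcr⟩, hc⟩ := hU.exists_add_mul_measureReal_Ici_le hQ a hr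
  have hcr2 : c ^ 2 ≤ r ^ 2 := pow_le_pow_left₀ hc0 hcr 2
  refine le_of_mul_le_mul_left ?_ (jump_dualStep_pos hr ⟨hc0, hcr⟩)
  calc 3 * (3 * r ^ 2 - 2 * c ^ 2) * Q.real (Ici (a + r))
      ≤ 4 * (τ * r ^ 2) - c ^ 2 := by linarith
    _ = 9 * (r ^ 2 - c ^ 2) * (4 / 9 * τ) + 3 * c ^ 2 * (4 / 3 * τ - 1 / 3) := by ring
    _ ≤ 9 * (r ^ 2 - c ^ 2) * max (4 / 9 * τ) (4 / 3 * τ - 1 / 3) +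
          3 * c ^ 2 * max (4 / 9 * τ) (4 / 3 * τ - 1 / 3) := by
        have : 0 ≤ r ^ 2 - c ^ 2 := sub_nonneg.2 hcr2
        gcongr
        · exact le_max_left _ _
        · exact le_max_right _ _
    _ = 3 * (3 * r ^ 2 - 2 * c ^ 2) * max (4 / 9 * τ) (4 / 3 * τ - 1 / 3) := by ring

end TailBound

section PVariable

theorem integral_sub_sq_eq {Q : Measure ℝ} [IsProbabilityMeasure Q] (hQ : MemLp id 2 Q) (a : ℝ) :
    ∫ x, (x - a) ^ 2 ∂Q = distVar Q + (distMean Q - a) ^ 2 := by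
  have hvar : ProbabilityTheory.variance (fun x => id x - a) Q = distVar Q := by
    rw [ProbabilityTheory.variance_sub_const hQ.aestronglyMeasurable,
      ProbabilityTheory.variance_eq_integral hQ.aemeasurable]
    rfl
  have hmean : ∫ x, id x - a ∂Q = distMean Q - a := by
    rw [integral_sub (hQ.integrable one_le_two) (integrable_const a), integral_const,
      probReal_univ, one_smul]
    rfl
  have h := ProbabilityTheory.variance_eq_sub (hQ.sub (memLp_const a))
  simp only [Pi.sub_def, Pi.pow_def, hvar, hmean] at h
  simp only [id] at h
  linarith

theorem Unimodal.measureReal_Ici_distMean_add_le {Q : Measure ℝ} [IsProbabilityMeasure Q]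
    (hU : Unimodal Q) (hQ : MemLp id 2 Q) {σ t : ℝ} (hσ : 0 < σ) (hvar : distVar Q ≤ σ ^ 2)
    (ht : 0 < t) :
    Q.real (Ici (distMean Q + σ * t)) ≤
      max (4 / 9 * (1 + t ^ 2)⁻¹) (4 / 3 * (1 + t ^ 2)⁻¹ - 1 / 3) := by
  -- Among all centres, `distMean Q - σ / t` minimises the ratio of the bound on the second moment
  -- to the squared distance to the threshold.
  have hmoment : ∫ x, (x - (distMean Q - σ / t)) ^ 2 ∂Q ≤
      (1 + t ^ 2)⁻¹ * (σ * t + σ / t) ^ 2 :=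
    calc ∫ x, (x - (distMean Q - σ / t)) ^ 2 ∂Q = distVar Q + (σ / t) ^ 2 := by
          rw [integral_sub_sq_eq hQ, sub_sub_cancel]
      _ ≤ σ ^ 2 + (σ / t) ^ 2 := by gcongr
      _ = (1 + t ^ 2)⁻¹ * (σ * t + σ / t) ^ 2 := by field_simp; ring
  have h := hU.measureReal_Ici_le hQ _ (by positivity) hmoment
  rwa [sub_add_add_cancel] at h

theorem pU_of_le {μ σ : ℝ} (hσ : 0 ≤ σ) {x : ℝ} (hx : x ≤ μ) : pU μ σ x = 1 := by
  have h : (x - μ) / σ ≤ 0 := div_nonpos_of_nonpos_of_nonneg (sub_nonpos.2 hx) hσ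
  rw [pU, max_eq_right h]
  norm_num

theorem measurable_pU (μ σ : ℝ) : Measurable (pU μ σ) := by
  unfold pU
  fun_prop

theorem Unimodal.measureReal_Ici_le_pU {μ σ : ℝ} (hσ : 0 < σ) {Q : Measure ℝ}
    (hQ : MemH μ σ Q) (hU : Unimodal Q) (x : ℝ) : Q.real (Ici x) ≤ pU μ σ x := by
  obtain ⟨hprob, hsq, hmean, hvar⟩ := hQ
  rcases le_or_gt x μ with hx | hx
  · rw [pU_of_le hσ.le hx]
    exact measureReal_le_one
  have hL2 : MemLp id 2 Q := (memLp_two_iff_integrable_sq aestronglyMeasurable_id).2 hsq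
  have ht : 0 < (x - μ) / σ := div_pos (sub_pos.2 hx) hσ
  have hsub : Ici x ⊆ Ici (distMean Q + σ * ((x - μ) / σ)) := by
    rw [mul_div_cancel₀ _ hσ.ne']
    exact Ici_subset_Ici.2 (by linarith)
  rw [pU, max_eq_left ht.le]
  exact (measureReal_mono hsub).trans (hU.measureReal_Ici_distMean_add_le hL2 hσ hvar ht)

theorem measureReal_setOf_le_le {α : Type*} [LinearOrder α] [TopologicalSpace α]
    [ClosedIicTopology α] [MeasurableSpace α] [BorelSpace α] {Q : Measure α} [IsFiniteMeasure Q]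
    [Q.InnerRegular] {p : α → ℝ} (hp : Measurable p) (hQp : ∀ x, Q.real (Ici x) ≤ p x) {ε : ℝ}
    (hε : 0 ≤ ε) : Q.real {x | p x ≤ ε} ≤ ε := by
  have hS : MeasurableSet {x | p x ≤ ε} := measurableSet_le hp measurable_const
  refine ENNReal.toReal_le_of_le_ofReal hε ?_
  rw [hS.measure_eq_iSup_isCompact Q]
  refine iSup₂_le fun K hKS => iSup_le fun hK => ?_
  rcases K.eq_empty_or_nonempty with rfl | hne
  · simp only [measure_empty, zero_le]
  obtain ⟨x, hxK, hx⟩ := hK.exists_isLeast hne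
  calc Q K ≤ Q (Ici x) := measure_mono hx
    _ = ENNReal.ofReal (Q.real (Ici x)) := (ofReal_measureReal).symm
    _ ≤ ENNReal.ofReal ε := ENNReal.ofReal_le_ofReal ((hQp x).trans (hKS hxK))

end PVariable

/-- `pU μ σ` is a p-variable for `H_U(μ,σ)`. -/
theorem stmt_11 (μ σ : ℝ) (hσ : 0 < σ) (Q : Measure ℝ)
    (hQ : MemH μ σ Q) (huni : Unimodal Q) (α : ℝ) (hα : α ∈ Ioo (0:ℝ) 1) :
    (Q {x | pU μ σ x ≤ α}).toReal ≤ α := by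
  have := hQ.1
  exact measureReal_setOf_le_le (measurable_pU μ σ) (huni.measureReal_Ici_le_pU hσ hQ) hα.1.le
end

section
/- For α ∈ (0,1), it holds that sup over Q ∈ H_US(0,1) of the left-quantile T^Q(1−α) = inf{x ∈ ℝ : Q((-∞,x]) ≥ 1−α} equals √(2/(9α)) if α ∈ (0, 1/6], equals √3·(1−2α) if α ∈ (1/6, 1/2], and equals 0 if α ∈ (1/2, 1). -/
open MeasureTheory Set
open scoped ENNReal

/-- A distribution `Q` with mean `m` is symmetric if
`Q((-∞, m−x]) = Q([m+x, ∞))` for all `x`. -/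
def IsSymmetricDist (Q : Measure ℝ) : Prop :=
  ∀ x : ℝ, Q (Iic (distMean Q - x)) = Q (Ici (distMean Q + x))

/-- Left-quantile function of a distribution on ℝ:
`T^Q(β) = inf {x : Q((-∞,x]) ≥ β}`. -/
noncomputable def leftQuantile (Q : Measure ℝ) (β : ℝ) : ℝ :=
  sInf {x : ℝ | β ≤ (Q (Iic x)).toReal}

/-!
Centre a symmetric unimodal `Q` at its mean. If the mode lies to the right of the mean, reflect;
hence the centred distribution has a nonincreasing density `g` on `(0, ∞)`. Let `h ≥ 0` be
nondecreasing and `0 < t ≤ L`. The function `φ = h - h(L) 1_{(t, ∞)}` is nonnegative on `(0, t]`,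
nonpositive on `(t, L]` and nonnegative beyond `L`, so replacing `g` by `g(t) 1_{(0, L]}` can only
decrease `∫ φ g`. If moreover `∫₀ᴸ φ ≥ 0`, this gives `h(L) ∫_{(t, ∞)} g ≤ ∫ h g`.

With `h(x) = x²` and `L = 3t/2` this is Gauss' inequality, which rules the tails `α ≤ 1/6`. For
`1/6 < α < 1/2` one takes `h(x) = x² + c`, with `L = √3 σ` and `c ≥ 0` chosen so that `∫₀ᴸ φ = 0`.
For `α ≥ 1/2` the quantile is at most the mean. The bounds are attained by mixtures of a point mass
at the mean and the uniform distribution on an interval centred there.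
-/

open scoped NNReal

section TailIntegral

variable {g : ℝ → ℝ} {t L : ℝ}

lemma mul_setIntegral_Ioc_le_of_sign_changes (hg : AntitoneOn g (Ioi 0))
    (hg0 : ∀ x, 0 < x → 0 ≤ g x) {φ : ℝ → ℝ} (ht : 0 < t)
    (h_init : ∀ x ∈ Ioc 0 t, 0 ≤ φ x) (h_mid : ∀ x ∈ Ioc t L, φ x ≤ 0)
    (h_tail : ∀ x ∈ Ioi L, 0 ≤ φ x) (hφ : IntegrableOn φ (Ioc 0 L))
    (hφg : IntegrableOn (fun x => φ x * g x) (Ioi 0)) :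
    g t * ∫ x in Ioc 0 L, φ x ≤ ∫ x in Ioi 0, φ x * g x := by
  have h_indicator : ∫ x in Ioi 0, (Ioc 0 L).indicator (fun x => g t * φ x) x
      = g t * ∫ x in Ioc 0 L, φ x := by
    rw [setIntegral_indicator measurableSet_Ioc, inter_eq_right.2 Ioc_subset_Ioi_self,
      integral_const_mul]
  rw [← h_indicator]
  refine setIntegral_mono_on
    (IntegrableOn.integrable_indicator (hφ.const_mul (g t)) measurableSet_Ioc).integrableOn hφg
    measurableSet_Ioi fun x (hx : 0 < x) => ?_
  rcases lt_or_ge L x with hLx | hxL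
  · rw [indicator_of_notMem fun hx' => hx'.2.not_gt hLx]
    exact mul_nonneg (h_tail x hLx) (hg0 x hx)
  rw [indicator_of_mem (mem_Ioc.2 ⟨hx, hxL⟩), mul_comm]
  rcases le_or_gt x t with hxt | htx
  · exact mul_le_mul_of_nonneg_left (hg hx ht hxt) (h_init x ⟨hx, hxt⟩)
  · exact mul_le_mul_of_nonpos_left (hg ht hx htx.le) (h_mid x ⟨htx, hxL⟩)

lemma integrableOn_and_setIntegral_sub_indicator_mul (hg : IntegrableOn g (Ioi 0)) {h : ℝ → ℝ}
    (hhg : IntegrableOn (fun x => h x * g x) (Ioi 0)) (ht : 0 ≤ t) (c : ℝ) :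
    IntegrableOn (fun x => (h x - (Ioi t).indicator (fun _ => c) x) * g x) (Ioi 0) ∧
      ∫ x in Ioi 0, (h x - (Ioi t).indicator (fun _ => c) x) * g x
        = (∫ x in Ioi 0, h x * g x) - c * ∫ x in Ioi t, g x := by
  have h_split (x : ℝ) : (h x - (Ioi t).indicator (fun _ => c) x) * g x
      = h x * g x - (Ioi t).indicator (fun x => c * g x) x := by
    by_cases hx : x ∈ Ioi t <;> simp [hx, sub_mul]
  have h_int : IntegrableOn ((Ioi t).indicator fun x => c * g x) (Ioi 0) :=
    IntegrableOn.indicator (hg.const_mul c) measurableSet_Ioi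
  simp only [h_split]
  refine ⟨Integrable.sub hhg h_int, ?_⟩
  rw [integral_sub hhg h_int, setIntegral_indicator measurableSet_Ioi,
    inter_eq_right.2 (Ioi_subset_Ioi ht), integral_const_mul]

lemma mul_setIntegral_Ioi_le_of_antitoneOn (hg : AntitoneOn g (Ioi 0))
    (hg0 : ∀ x, 0 < x → 0 ≤ g x) (hgi : IntegrableOn g (Ioi 0)) {h : ℝ → ℝ}
    (hh : MonotoneOn h (Ici 0)) (hh0 : 0 ≤ h 0) (hhg : IntegrableOn (fun x => h x * g x) (Ioi 0))
    (ht : 0 < t) (htL : t ≤ L) (hL : (L - t) * h L ≤ ∫ x in 0..L, h x) :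
    h L * ∫ x in Ioi t, g x ≤ ∫ x in Ioi 0, h x * g x := by
  have hL0 : 0 ≤ L := ht.le.trans htL
  set step : ℝ → ℝ := (Ioi t).indicator fun _ => h L
  have step_of_le {x : ℝ} (hx : x ≤ t) : step x = 0 := indicator_of_notMem (notMem_Ioi.2 hx) _
  have step_of_lt {x : ℝ} (hx : t < x) : step x = h L := indicator_of_mem (mem_Ioi.2 hx) _
  have h_int : IntegrableOn h (Ioc 0 L) :=
    (intervalIntegrable_iff_integrableOn_Ioc_of_le hL0).1
      (hh.mono (by simpa [uIcc_of_le hL0] using Icc_subset_Ici_self)).intervalIntegrable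
  have step_int : IntegrableOn step (Ioc 0 L) :=
    Integrable.indicator (integrable_const _) measurableSet_Ioi
  have test_nonneg : 0 ≤ ∫ x in Ioc 0 L, (h x - step x) := by
    rw [integral_sub h_int step_int, setIntegral_indicator measurableSet_Ioi, Ioc_inter_Ioi,
      max_eq_right ht.le, ← intervalIntegral.integral_of_le hL0, setIntegral_const,
      Real.volume_real_Ioc_of_le htL, smul_eq_mul]
    exact sub_nonneg.2 hL
  obtain ⟨test_mul_int, test_mul⟩ :=
    integrableOn_and_setIntegral_sub_indicator_mul hgi hhg ht.le (h L)
  refine sub_nonneg.1 (test_mul ▸ (mul_nonneg (hg0 t ht) test_nonneg).trans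
    (mul_setIntegral_Ioc_le_of_sign_changes hg hg0 ht ?_ ?_ ?_ (h_int.sub step_int) test_mul_int))
  · intro x hx
    rw [step_of_le hx.2, sub_zero]
    exact hh0.trans (hh self_mem_Ici hx.1.le hx.1.le)
  · intro x hx
    rw [step_of_lt hx.1, sub_nonpos]
    exact hh (ht.trans hx.1).le hL0 hx.2
  · intro x (hx : L < x)
    rw [step_of_lt (htL.trans_lt hx), sub_nonneg]
    exact hh hL0 (hL0.trans hx.le) hx.le

lemma mul_measureReal_Ioi_le_setIntegral {P : Measure ℝ} [IsFiniteMeasure P] {f : ℝ → ℝ≥0}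
    (hf : AntitoneOn f (Ioi 0))
    (hP : P.restrict (Ioi 0) = (volume.restrict (Ioi 0)).withDensity fun x => f x) {h : ℝ → ℝ}
    (hh : MonotoneOn h (Ici 0)) (hh0 : 0 ≤ h 0) (hhi : IntegrableOn h (Ioi 0) P)
    (ht : 0 < t) (htL : t ≤ L) (hL : (L - t) * h L ≤ ∫ x in 0..L, h x) :
    h L * P.real (Ioi t) ≤ ∫ x in Ioi 0, h x ∂P := by
  have hfm : AEMeasurable f (volume.restrict (Ioi 0)) :=
    aemeasurable_restrict_of_antitoneOn measurableSet_Ioi hf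
  have integrableOn_mul {φ : ℝ → ℝ} (hφ : IntegrableOn φ (Ioi 0) P) :
      IntegrableOn (fun x => φ x * f x) (Ioi 0) := by
    rw [IntegrableOn, hP, integrable_withDensity_iff_integrable_smul₀ hfm] at hφ
    simpa [IntegrableOn, NNReal.smul_def, mul_comm] using hφ
  have setIntegral_eq (φ : ℝ → ℝ) : ∫ x in Ioi 0, φ x ∂P = ∫ x in Ioi 0, φ x * f x := by
    rw [hP, integral_withDensity_eq_integral_smul₀ hfm]
    simp [NNReal.smul_def, mul_comm]
  have tail_eq : P.real (Ioi t) = ∫ x in Ioi t, (f x : ℝ) := by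
    have hsub : Ioi t ⊆ Ioi 0 := Ioi_subset_Ioi ht.le
    have hind (x : ℝ) :
        (Ioi t).indicator 1 x * (f x : ℝ) = (Ioi t).indicator (fun x => ↑(f x)) x := by
      by_cases hx : x ∈ Ioi t <;> simp [hx]
    have := setIntegral_eq ((Ioi t).indicator 1)
    simp only [hind, setIntegral_indicator measurableSet_Ioi, inter_eq_right.2 hsub] at this
    simpa using this
  rw [tail_eq, setIntegral_eq]
  exact mul_setIntegral_Ioi_le_of_antitoneOn (g := fun x => f x)
    (fun x hx y hy hxy => NNReal.coe_le_coe.2 (hf hx hy hxy)) (fun x _ => (f x).coe_nonneg)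
    (by simpa using integrableOn_mul (φ := fun _ => 1) (integrable_const _)) hh hh0
    (integrableOn_mul hhi) ht htL hL

end TailIntegral

lemma map_withDensity_measurableEquiv {X Y : Type*} [MeasurableSpace X] [MeasurableSpace Y]
    (e : X ≃ᵐ Y) {μ : Measure X} {ν : Measure Y} (he : MeasurePreserving e μ ν) (f : X → ℝ≥0∞) :
    (μ.withDensity f).map e = ν.withDensity (f ∘ e.symm) := by
  ext s hs
  rw [Measure.map_apply e.measurable hs, withDensity_apply _ hs,
    withDensity_apply _ (e.measurable hs),
    ← he.setLIntegral_comp_preimage_emb e.measurableEmbedding]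
  simp

/-- `x₀` is a mode of `Q`, in the sense of the definition of `Unimodal`, so that `Unimodal Q` says
`∃ x₀, HasMode Q x₀`. The point is not unique in general. -/
def HasMode (Q : Measure ℝ) (x₀ : ℝ) : Prop :=
  ∃ (c : ℝ≥0∞) (f : ℝ → ℝ≥0∞), Q = c • Measure.dirac x₀ + volume.withDensity f ∧
    MonotoneOn f (Iio x₀) ∧ AntitoneOn f (Ioi x₀)

namespace HasMode

variable {Q : Measure ℝ} {x₀ : ℝ}

lemma map_sub_right (hQ : HasMode Q x₀) (m : ℝ) : HasMode (Q.map (· - m)) (x₀ - m) := by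
  obtain ⟨c, f, rfl, hmono, hanti⟩ := hQ
  refine ⟨c, fun x => f (x + m), ?_, fun x hx y hy hxy => ?_, fun x hx y hy hxy => ?_⟩
  · rw [Measure.map_add _ _ (by fun_prop), Measure.map_smul, Measure.map_dirac]
    congr 1
    exact map_withDensity_measurableEquiv (.subRight m) (measurePreserving_sub_right volume m) f
  · exact hmono (lt_sub_iff_add_lt.1 (mem_Iio.1 hx)) (lt_sub_iff_add_lt.1 (mem_Iio.1 hy))
      (by gcongr)
  · exact hanti (sub_lt_iff_lt_add.1 (mem_Ioi.1 hx)) (sub_lt_iff_lt_add.1 (mem_Ioi.1 hy))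
      (by gcongr)

lemma map_neg (hQ : HasMode Q x₀) : HasMode (Q.map Neg.neg) (-x₀) := by
  obtain ⟨c, f, rfl, hmono, hanti⟩ := hQ
  refine ⟨c, fun x => f (-x), ?_, fun x hx y hy hxy => ?_, fun x hx y hy hxy => ?_⟩
  · rw [Measure.map_add _ _ measurable_neg, Measure.map_smul, Measure.map_dirac]
    congr 1
    exact map_withDensity_measurableEquiv (.neg ℝ) (Measure.measurePreserving_neg volume) f
  · exact hanti (lt_neg.1 (mem_Iio.1 hy)) (lt_neg.1 (mem_Iio.1 hx)) (neg_le_neg hxy)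
  · exact hmono (neg_lt.1 (mem_Ioi.1 hy)) (neg_lt.1 (mem_Ioi.1 hx)) (neg_le_neg hxy)

lemma exists_antitoneOn_density_Ioi [IsFiniteMeasure Q] (hQ : HasMode Q x₀) :
    ∃ f : ℝ → ℝ≥0, AntitoneOn f (Ioi x₀) ∧
      Q.restrict (Ioi x₀) = (volume.restrict (Ioi x₀)).withDensity fun x => f x := by
  obtain ⟨c, f, hQf, -, hf⟩ := hQ
  have hrestrict : Q.restrict (Ioi x₀) = (volume.restrict (Ioi x₀)).withDensity f := by
    rw [hQf, Measure.restrict_add, Measure.restrict_smul, restrict_dirac,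
      if_neg self_notMem_Ioi, smul_zero, zero_add, restrict_withDensity measurableSet_Ioi]
  have hf_top : ∀ x ∈ Ioi x₀, f x ≠ ∞ := by
    intro x hx hfx
    have hle : f x * volume (Ioc x₀ x) ≤ Q (Ioc x₀ x) := by
      calc f x * volume (Ioc x₀ x) = ∫⁻ _ in Ioc x₀ x, f x := (setLIntegral_const _ _).symm
        _ ≤ ∫⁻ y in Ioc x₀ x, f y :=
          setLIntegral_mono' measurableSet_Ioc fun y hy => hf hy.1 hx hy.2
        _ ≤ Q (Ioc x₀ x) := by
          rw [hQf, ← withDensity_apply _ measurableSet_Ioc]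
          exact Measure.le_add_left le_rfl _
    have hvol : volume (Ioc x₀ x) ≠ 0 := by simpa using hx
    rw [hfx, ENNReal.top_mul hvol, top_le_iff] at hle
    exact measure_ne_top _ _ hle
  refine ⟨fun x => (f x).toNNReal, fun x hx y hy hxy =>
    ENNReal.toNNReal_mono (hf_top x hx) (hf hx hy hxy), hrestrict.trans (withDensity_congr_ae ?_)⟩
  filter_upwards [ae_restrict_mem measurableSet_Ioi] with x hx
  rw [ENNReal.coe_toNNReal (hf_top x hx)]

end HasMode

section NegInvariant

variable {P : Measure ℝ} [P.IsNegInvariant]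

lemma Unimodal.exists_antitoneOn_density_Ioi_zero [IsFiniteMeasure P] (hP : Unimodal P) :
    ∃ f : ℝ → ℝ≥0, AntitoneOn f (Ioi 0) ∧
      P.restrict (Ioi 0) = (volume.restrict (Ioi 0)).withDensity fun x => f x := by
  obtain ⟨x₀, hx₀, hmode⟩ : ∃ x₀ ≤ 0, HasMode P x₀ := by
    obtain ⟨x₀, hmode⟩ : ∃ x₀, HasMode P x₀ := hP
    rcases le_total x₀ 0 with hx₀ | hx₀
    · exact ⟨x₀, hx₀, hmode⟩
    · exact ⟨-x₀, neg_nonpos.2 hx₀, P.map_neg_eq_self ▸ hmode.map_neg⟩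
  obtain ⟨f, hf, hPf⟩ := hmode.exists_antitoneOn_density_Ioi
  have hsub : Ioi 0 ⊆ Ioi x₀ := Ioi_subset_Ioi hx₀
  refine ⟨f, hf.mono hsub, ?_⟩
  rw [← Measure.restrict_restrict_of_subset hsub, hPf, restrict_withDensity measurableSet_Ioi,
    Measure.restrict_restrict_of_subset hsub]

lemma two_mul_setIntegral_Ioi_zero_le {φ : ℝ → ℝ} (hφ : φ.Even) (hφ0 : ∀ x, 0 ≤ φ x)
    (hφi : Integrable φ P) : 2 * ∫ x in Ioi 0, φ x ∂P ≤ ∫ x, φ x ∂P := by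
  have hreflect : ∫ x in Iio 0, φ x ∂P = ∫ x in Ioi 0, φ x ∂P := by
    simpa [hφ _] using (Measure.measurePreserving_neg P).setIntegral_preimage_emb
      (MeasurableEquiv.neg ℝ).measurableEmbedding φ (Ioi 0)
  calc 2 * ∫ x in Ioi 0, φ x ∂P = (∫ x in Iio 0, φ x ∂P) + ∫ x in Ioi 0, φ x ∂P := by
        rw [hreflect, two_mul]
    _ = ∫ x in Iio 0 ∪ Ioi 0, φ x ∂P :=
        (setIntegral_union (Iio_disjoint_Ioi_same) measurableSet_Ioi hφi.integrableOn
          hφi.integrableOn).symm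
    _ ≤ ∫ x, φ x ∂P := setIntegral_le_integral hφi (.of_forall hφ0)

lemma Unimodal.two_mul_mul_measureReal_Ioi_le_integral [IsFiniteMeasure P] (hP : Unimodal P)
    {h : ℝ → ℝ} (h_even : h.Even) (hh : MonotoneOn h (Ici 0)) (hh0 : 0 ≤ h 0)
    (hhi : Integrable h P) {t L : ℝ} (ht : 0 < t) (htL : t ≤ L)
    (hL : (L - t) * h L ≤ ∫ x in 0..L, h x) :
    2 * (h L * P.real (Ioi t)) ≤ ∫ x, h x ∂P := by
  obtain ⟨f, hf, hPf⟩ := hP.exists_antitoneOn_density_Ioi_zero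
  have h_nonneg (x : ℝ) : 0 ≤ h x := by
    have h_abs : h |x| = h x := by rcases abs_choice x with hx | hx <;> simp [hx, h_even x]
    exact h_abs ▸ hh0.trans (hh self_mem_Ici (abs_nonneg x) (abs_nonneg x))
  calc 2 * (h L * P.real (Ioi t)) ≤ 2 * ∫ x in Ioi 0, h x ∂P := by
        gcongr
        exact mul_measureReal_Ioi_le_setIntegral hf hPf hh hh0 hhi.integrableOn ht htL hL
    _ ≤ ∫ x, h x ∂P := two_mul_setIntegral_Ioi_zero_le h_even h_nonneg hhi

end NegInvariant

section TailBounds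

variable {Q : Measure ℝ}

lemma IsSymmetricDist.isNegInvariant_map_sub [IsFiniteMeasure Q] (hQ : IsSymmetricDist Q) :
    (Q.map (· - distMean Q)).IsNegInvariant := by
  have : IsFiniteMeasure (Q.map (· - distMean Q)).neg := Measure.isFiniteMeasure_map _ _
  refine ⟨Measure.ext_of_Iic _ _ fun a => ?_⟩
  rw [Measure.neg_apply, neg_Iic, Measure.map_apply (by fun_prop) measurableSet_Ici,
    Measure.map_apply (by fun_prop) measurableSet_Iic, preimage_sub_const_Ici,
    preimage_sub_const_Iic, add_comm (-a), add_comm a, ← hQ, sub_neg_eq_add]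

lemma IsSymmetricDist.measureReal_Ioi_distMean_le_half [IsProbabilityMeasure Q]
    (hQ : IsSymmetricDist Q) : Q.real (Ioi (distMean Q)) ≤ 1 / 2 := by
  have hsymm : Q.real (Iic (distMean Q)) = Q.real (Ici (distMean Q)) := by
    simpa [measureReal_def] using congrArg ENNReal.toReal (hQ 0)
  have hle : Q.real (Ioi (distMean Q)) ≤ Q.real (Ici (distMean Q)) :=
    measureReal_mono Ioi_subset_Ici_self
  rw [← hsymm, ← compl_Ioi, probReal_compl_eq_one_sub measurableSet_Ioi] at hle
  linarith

lemma integrable_sq_sub_const [IsFiniteMeasure Q] (hQ : Integrable (fun x => x ^ 2) Q) (m : ℝ) :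
    Integrable (fun x => (x - m) ^ 2) Q :=
  (((memLp_two_iff_integrable_sq (by fun_prop)).2 hQ).sub (memLp_const m)).integrable_sq

variable [IsProbabilityMeasure Q]

lemma Unimodal.two_mul_mul_measureReal_Ioi_le_distVar_add (hU : Unimodal Q)
    (hS : IsSymmetricDist Q) (hQ : Integrable (fun x => x ^ 2) Q) {c t L : ℝ} (hc : 0 ≤ c)
    (ht : 0 < t) (htL : t ≤ L) (hL : (L - t) * (L ^ 2 + c) ≤ L ^ 3 / 3 + c * L) :
    2 * ((L ^ 2 + c) * Q.real (Ioi (distMean Q + t))) ≤ distVar Q + c := by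
  have hmeas : Measurable fun x : ℝ => x - distMean Q := by fun_prop
  have := hS.isNegInvariant_map_sub
  have hcentred : Unimodal (Q.map (· - distMean Q)) :=
    let ⟨_, hmode⟩ := hU
    ⟨_, HasMode.map_sub_right hmode _⟩
  have hsq := integrable_sq_sub_const hQ (distMean Q)
  have hsq_add : Integrable (fun x => (x - distMean Q) ^ 2 + c) Q := hsq.add (integrable_const c)
  have key := hcentred.two_mul_mul_measureReal_Ioi_le_integral (h := fun x => x ^ 2 + c)
    (fun x => by ring) (fun x (hx : 0 ≤ x) y _ hxy => by dsimp only; gcongr) (by positivity)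
    ((integrable_map_measure (by fun_prop) hmeas.aemeasurable).2 hsq_add)
    ht htL (hL.trans_eq (by
      rw [intervalIntegral.integral_add (by simp) (by simp), integral_pow]
      norm_num
      ring))
  rw [map_measureReal_apply hmeas measurableSet_Ioi, preimage_sub_const_Ioi, add_comm t,
    integral_map hmeas.aemeasurable (by fun_prop), integral_add hsq (integrable_const c)] at key
  simpa [distVar] using key

lemma Unimodal.measureReal_Ioi_distMean_add_le_two_mul_div (hU : Unimodal Q)
    (hS : IsSymmetricDist Q) (hQ : Integrable (fun x => x ^ 2) Q) {t : ℝ} (ht : 0 < t) :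
    Q.real (Ioi (distMean Q + t)) ≤ 2 * distVar Q / (9 * t ^ 2) := by
  have := hU.two_mul_mul_measureReal_Ioi_le_distVar_add hS hQ (L := 3 / 2 * t) le_rfl ht
    (by linarith) (le_of_eq (by ring))
  rw [le_div_iff₀ (by positivity)]
  linarith

lemma Unimodal.measureReal_Ioi_distMean_add_le_sub_div (hU : Unimodal Q)
    (hS : IsSymmetricDist Q) (hQ : Integrable (fun x => x ^ 2) Q) {t L : ℝ} (ht : 0 < t)
    (htL : t ≤ 2 / 3 * L) (hvar : distVar Q ≤ L ^ 2 / 3) :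
    Q.real (Ioi (distMean Q + t)) ≤ (L - t) / (2 * L) := by
  have hL : 0 < L := by linarith
  -- The solution of `(L - t) * (L ^ 2 + c) = L ^ 3 / 3 + c * L`.
  obtain ⟨c, hc⟩ : ∃ c, c = L ^ 2 * (2 / 3 * L - t) / t := ⟨_, rfl⟩
  have hct : c * t = L ^ 2 * (2 / 3 * L - t) := by rw [hc, div_mul_cancel₀ _ ht.ne']
  have hc0 : 0 ≤ c := hc ▸ div_nonneg (mul_nonneg (sq_nonneg L) (by linarith)) ht.le
  have key := hU.two_mul_mul_measureReal_Ioi_le_distVar_add hS hQ hc0 ht (L := L) (by linarith)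
    (by linarith)
  have hcoeff : L ^ 2 + c = 2 * L ^ 3 / (3 * t) := by
    rw [hc]
    field_simp
    ring
  have hrhs : L ^ 2 / 3 + c = 2 * L ^ 3 / (3 * t) * ((L - t) / L) := by
    rw [hc]
    field_simp
    ring
  have : 2 * Q.real (Ioi (distMean Q + t)) ≤ (L - t) / L := by
    refine le_of_mul_le_mul_left ?_ (show 0 < 2 * L ^ 3 / (3 * t) by positivity)
    rw [hcoeff] at key
    linarith
  calc Q.real (Ioi (distMean Q + t)) ≤ (L - t) / L / 2 := by linarith
    _ = (L - t) / (2 * L) := by rw [div_div, mul_comm L]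

end TailBounds

section LeftQuantile

variable {Q : Measure ℝ} [IsProbabilityMeasure Q] {α t : ℝ}

lemma one_sub_le_measure_Iic_iff :
    1 - α ≤ (Q (Iic t)).toReal ↔ Q.real (Ioi t) ≤ α := by
  rw [← measureReal_def, ← compl_Ioi, probReal_compl_eq_one_sub measurableSet_Ioi,
    sub_le_sub_iff_left]

lemma leftQuantile_one_sub_le (hα : α < 1) (h : Q.real (Ioi t) ≤ α) :
    leftQuantile Q (1 - α) ≤ t := by
  refine csInf_le ?_ (one_sub_le_measure_Iic_iff.2 h)
  obtain ⟨b, hb⟩ := ((ProbabilityTheory.tendsto_cdf_atBot Q).eventually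
    (gt_mem_nhds (sub_pos.2 hα))).exists
  refine ⟨b, fun x hx => le_of_not_gt fun hxb => ?_⟩
  rw [ProbabilityTheory.cdf_eq_real] at hb
  exact ((hx.trans (measureReal_mono (Iic_subset_Iic.2 hxb.le))).trans_lt hb).false

lemma leftQuantile_one_sub_eq (h : Q.real (Ioi t) ≤ α) (h_lt : ∀ x < t, α < Q.real (Ioi x)) :
    leftQuantile Q (1 - α) = t :=
  IsLeast.csInf_eq ⟨one_sub_le_measure_Iic_iff.2 h, fun x hx =>
    le_of_not_gt fun hxt => (h_lt x hxt).not_ge (one_sub_le_measure_Iic_iff.1 hx)⟩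

end LeftQuantile

lemma leftQuantile_dirac {α : ℝ} (hα : α ∈ Ico 0 1) (m : ℝ) :
    leftQuantile (Measure.dirac m) (1 - α) = m :=
  leftQuantile_one_sub_eq (by simpa [measureReal_def] using hα.1)
    fun x hx => by simpa [measureReal_def, hx] using hα.2

/-- The mixture, with weights `1 - p` and `p`, of the Dirac mass at `m` and the uniform
distribution on `[m - a, m + a]`; the extremal distributions are of this form. -/
noncomputable def diracUniform (m p a : ℝ) : Measure ℝ :=
  ENNReal.ofReal (1 - p) • Measure.dirac m +
    ENNReal.ofReal (p / (2 * a)) • volume.restrict (Icc (m - a) (m + a))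

/-- The class `H_US(μ,σ)` of symmetric unimodal distributions with mean at most `μ` and variance
at most `σ²`. -/
def symmetricUnimodalClass (μ σ : ℝ) : Set (Measure ℝ) :=
  {Q | MemH μ σ Q ∧ IsSymmetricDist Q ∧ Unimodal Q}

section DiracUniform

variable {m p a : ℝ}

lemma diracUniform_zero_weight : diracUniform m 0 a = Measure.dirac m := by
  simp [diracUniform]

lemma isProbabilityMeasure_diracUniform (hp : p ∈ Icc 0 1) (ha : 0 < a) :
    IsProbabilityMeasure (diracUniform m p a) := by
  obtain ⟨hp0, hp1⟩ := hp
  constructor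
  simp only [diracUniform, Measure.add_apply, Measure.smul_apply, measure_univ, smul_eq_mul,
    mul_one, Measure.restrict_apply_univ, Real.volume_Icc]
  rw [← ENNReal.ofReal_mul (by positivity),
    ← ENNReal.ofReal_add (by linarith) (mul_nonneg (by positivity) (by linarith)),
    ENNReal.ofReal_eq_one]
  field_simp
  ring

lemma integrable_diracUniform {φ : ℝ → ℝ} (hφ : Continuous φ) :
    Integrable φ (diracUniform m p a) :=
  ((integrable_dirac (by simp)).smul_measure ENNReal.ofReal_ne_top).add_measure
    (hφ.integrableOn_Icc.smul_measure ENNReal.ofReal_ne_top)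

lemma integral_diracUniform (hp : p ∈ Icc 0 1) (ha : 0 < a) {φ : ℝ → ℝ} (hφ : Continuous φ) :
    ∫ x, φ x ∂diracUniform m p a
      = (1 - p) * φ m + p / (2 * a) * ∫ x in (m - a)..(m + a), φ x := by
  obtain ⟨hp0, hp1⟩ := hp
  rw [diracUniform, integral_add_measure
    ((integrable_dirac (by simp)).smul_measure ENNReal.ofReal_ne_top)
    (hφ.integrableOn_Icc.smul_measure ENNReal.ofReal_ne_top), integral_smul_measure,
    integral_smul_measure, integral_dirac, ENNReal.toReal_ofReal (by linarith),
    ENNReal.toReal_ofReal (by positivity), integral_Icc_eq_integral_Ioc,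
    intervalIntegral.integral_of_le (by linarith), smul_eq_mul, smul_eq_mul]

lemma distMean_diracUniform (hp : p ∈ Icc 0 1) (ha : 0 < a) :
    distMean (diracUniform m p a) = m := by
  rw [distMean, integral_diracUniform hp ha continuous_id', integral_id]
  field_simp
  ring

lemma distVar_diracUniform (hp : p ∈ Icc 0 1) (ha : 0 < a) :
    distVar (diracUniform m p a) = p * a ^ 2 / 3 := by
  rw [distVar, distMean_diracUniform hp ha, integral_diracUniform hp ha (by fun_prop),
    intervalIntegral.integral_comp_sub_right (fun x => x ^ 2), integral_pow]
  field_simp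
  norm_num
  ring

lemma isSymmetricDist_diracUniform (hp : p ∈ Icc 0 1) (ha : 0 < a) :
    IsSymmetricDist (diracUniform m p a) := by
  intro x
  rw [distMean_diracUniform hp ha]
  have h_uniform : volume.restrict (Icc (m - a) (m + a)) (Iic (m - x))
      = volume.restrict (Icc (m - a) (m + a)) (Ici (m + x)) := by
    rw [Measure.restrict_apply measurableSet_Iic, Measure.restrict_apply measurableSet_Ici,
      ← (Measure.measurePreserving_sub_left volume (2 * m)).measure_preimage
        (measurableSet_Ici.inter measurableSet_Icc).nullMeasurableSet]
    congr 1
    ext y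
    simp only [mem_inter_iff, mem_Iic, mem_Icc, mem_preimage, mem_Ici]
    constructor <;> rintro ⟨h₁, h₂, h₃⟩ <;> refine ⟨?_, ?_, ?_⟩ <;> linarith
  simp [diracUniform, h_uniform, indicator_apply]

lemma unimodal_diracUniform : Unimodal (diracUniform m p a) := by
  refine ⟨m, ENNReal.ofReal (1 - p),
    (Icc (m - a) (m + a)).indicator fun _ => ENNReal.ofReal (p / (2 * a)), ?_,
    fun x _ y (hy : y < m) hxy => indicator_apply_le' (fun hx => ?_) fun _ => zero_le,
    fun x (hx : m < x) y _ hxy => indicator_apply_le' (fun hy => ?_) fun _ => zero_le⟩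
  · rw [withDensity_indicator measurableSet_Icc, withDensity_const, diracUniform]
  · rw [indicator_of_mem (mem_Icc.2 ⟨hx.1.trans hxy, by linarith [hx.1]⟩)]
  · rw [indicator_of_mem (mem_Icc.2 ⟨by linarith [hy.2], hxy.trans hy.2⟩)]

lemma diracUniform_mem_symmetricUnimodalClass {σ : ℝ} (hp : p ∈ Icc 0 1) (ha : 0 < a)
    (h : p * a ^ 2 / 3 ≤ σ ^ 2) : diracUniform m p a ∈ symmetricUnimodalClass m σ :=
  ⟨⟨isProbabilityMeasure_diracUniform hp ha, integrable_diracUniform (by fun_prop),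
    (distMean_diracUniform hp ha).le, (distVar_diracUniform hp ha).trans_le h⟩,
    isSymmetricDist_diracUniform hp ha, unimodal_diracUniform⟩

lemma diracUniform_real_Ioi_add (hp : 0 ≤ p) {x : ℝ} (hx : x ∈ Icc 0 a) :
    (diracUniform m p a).real (Ioi (m + x)) = p * (a - x) / (2 * a) := by
  obtain ⟨hx0, hxa⟩ := hx
  have ha : 0 ≤ a := hx0.trans hxa
  have h_inter : Ioi (m + x) ∩ Icc (m - a) (m + a) = Ioc (m + x) (m + a) := by
    ext y
    simp only [mem_inter_iff, mem_Ioi, mem_Icc, mem_Ioc]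
    exact ⟨fun h => ⟨h.1, h.2.2⟩, fun h => ⟨h.1, by linarith [h.1], h.2⟩⟩
  rw [measureReal_def, diracUniform, Measure.add_apply, Measure.smul_apply, Measure.smul_apply,
    Measure.restrict_apply measurableSet_Ioi, h_inter, Real.volume_Ioc,
    Measure.dirac_apply' _ measurableSet_Ioi, indicator_of_notMem (by simpa using hx0), smul_zero,
    zero_add, smul_eq_mul, ENNReal.toReal_mul, ENNReal.toReal_ofReal (by positivity),
    ENNReal.toReal_ofReal (by linarith)]
  ring

lemma leftQuantile_diracUniform (hp : p ∈ Ioc 0 1) {t : ℝ} (ht : t ∈ Ioc 0 a) :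
    leftQuantile (diracUniform m p a) (1 - p * (a - t) / (2 * a)) = m + t := by
  obtain ⟨ht0, hta⟩ := ht
  have ha : 0 < a := ht0.trans_le hta
  have := isProbabilityMeasure_diracUniform (m := m) (Ioc_subset_Icc_self hp) ha
  refine leftQuantile_one_sub_eq (diracUniform_real_Ioi_add hp.1.le ⟨ht0.le, hta⟩).le
    fun x hx => ?_
  have h_lt : max (x - m) 0 < t := max_lt (by linarith) ht0
  calc p * (a - t) / (2 * a) < p * (a - max (x - m) 0) / (2 * a) := by
        have := hp.1
        gcongr
    _ = (diracUniform m p a).real (Ioi (m + max (x - m) 0)) :=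
        (diracUniform_real_Ioi_add hp.1.le ⟨le_max_right _ _, h_lt.le.trans hta⟩).symm
    _ ≤ (diracUniform m p a).real (Ioi x) :=
        measureReal_mono (Ioi_subset_Ioi (by linarith [le_max_left (x - m) 0]))

end DiracUniform

section Suprema

variable {μ σ α : ℝ} {Q : Measure ℝ}

lemma leftQuantile_le_of_measureReal_Ioi_distMean_add_le (hQ : MemH μ σ Q) (hα : α < 1) {t : ℝ}
    (h : Q.real (Ioi (distMean Q + t)) ≤ α) : leftQuantile Q (1 - α) ≤ μ + t := by
  have := hQ.1
  have hmean := hQ.2.2.1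
  exact (leftQuantile_one_sub_le hα h).trans (by gcongr)

lemma isGreatest_leftQuantile_of_le_one_sixth (hσ : 0 < σ) (hα : α ∈ Ioc 0 (1 / 6)) :
    IsGreatest ((leftQuantile · (1 - α)) '' symmetricUnimodalClass μ σ)
      (μ + σ * √(2 / (9 * α))) := by
  obtain ⟨hα0, hα6⟩ := hα
  obtain ⟨t, ht⟩ : ∃ t, t = σ * √(2 / (9 * α)) := ⟨_, rfl⟩
  have ht0 : 0 < t := by rw [ht]; positivity
  have ht_sq : 9 * t ^ 2 * α = 2 * σ ^ 2 := by
    rw [ht, mul_pow, Real.sq_sqrt (by positivity)]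
    field_simp
  rw [← ht]
  constructor
  · refine ⟨diracUniform μ (6 * α) (3 / 2 * t), diracUniform_mem_symmetricUnimodalClass
      ⟨by positivity, by linarith⟩ (by positivity) (by linarith), ?_⟩
    have h_tail : 6 * α * (3 / 2 * t - t) / (2 * (3 / 2 * t)) = α := by
      field_simp
      norm_num
    have := leftQuantile_diracUniform (m := μ) (p := 6 * α) (a := 3 / 2 * t) (t := t)
      ⟨by positivity, by linarith⟩ ⟨ht0, by linarith⟩
    rwa [h_tail] at this
  · rintro _ ⟨Q, ⟨hQ, hS, hU⟩, rfl⟩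
    have ⟨_, hsq, _, hvar⟩ := hQ
    refine leftQuantile_le_of_measureReal_Ioi_distMean_add_le hQ (by linarith)
      ((hU.measureReal_Ioi_distMean_add_le_two_mul_div hS hsq ht0).trans ?_)
    rw [div_le_iff₀ (by positivity)]
    linarith

lemma isGreatest_leftQuantile_of_one_sixth_le (hσ : 0 < σ) (hα : α ∈ Ico (1 / 6) (1 / 2)) :
    IsGreatest ((leftQuantile · (1 - α)) '' symmetricUnimodalClass μ σ)
      (μ + σ * (√3 * (1 - 2 * α))) := by
  obtain ⟨hα6, hα2⟩ := hα
  obtain ⟨L, hL⟩ : ∃ L, L = σ * √3 := ⟨_, rfl⟩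
  have hL0 : 0 < L := by rw [hL]; positivity
  have hL_sq : L ^ 2 / 3 = σ ^ 2 := by
    rw [hL, mul_pow, Real.sq_sqrt (by positivity)]
    ring
  have h_tail : (L - L * (1 - 2 * α)) / (2 * L) = α := by
    field_simp
    ring
  have ht0 : 0 < L * (1 - 2 * α) := mul_pos hL0 (by linarith)
  rw [← mul_assoc, ← hL]
  constructor
  · refine ⟨diracUniform μ 1 L, diracUniform_mem_symmetricUnimodalClass ⟨zero_le_one, le_rfl⟩ hL0
      (by rw [one_mul, hL_sq]), ?_⟩
    have := leftQuantile_diracUniform (m := μ) (p := 1) (a := L) ⟨one_pos, le_rfl⟩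
      ⟨ht0, by nlinarith⟩
    rwa [one_mul, h_tail] at this
  · rintro _ ⟨Q, ⟨hQ, hS, hU⟩, rfl⟩
    have ⟨_, hsq, _, hvar⟩ := hQ
    exact leftQuantile_le_of_measureReal_Ioi_distMean_add_le hQ (by linarith)
      ((hU.measureReal_Ioi_distMean_add_le_sub_div hS hsq ht0 (by nlinarith)
        (hvar.trans_eq hL_sq.symm)).trans_eq h_tail)

lemma isGreatest_leftQuantile_of_half_le (hα : α ∈ Ico (1 / 2) 1) :
    IsGreatest ((leftQuantile · (1 - α)) '' symmetricUnimodalClass μ σ) μ := by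
  obtain ⟨hα2, hα1⟩ := hα
  constructor
  · refine ⟨diracUniform μ 0 1, diracUniform_mem_symmetricUnimodalClass ⟨le_rfl, zero_le_one⟩
      one_pos (by simpa using sq_nonneg σ), ?_⟩
    rw [diracUniform_zero_weight]
    exact leftQuantile_dirac ⟨by linarith, hα1⟩ μ
  · rintro _ ⟨Q, ⟨hQ, hS, -⟩, rfl⟩
    have := hQ.1
    simpa using leftQuantile_le_of_measureReal_Ioi_distMean_add_le (t := 0) hQ hα1
      (by simpa using hS.measureReal_Ioi_distMean_le_half.trans hα2)

end Suprema

theorem stmt_14_general {μ σ α : ℝ} (hσ : 0 < σ) (hα : α ∈ Ioo 0 1) :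
    IsLUB {r : ℝ | ∃ Q : Measure ℝ, MemH μ σ Q ∧ IsSymmetricDist Q ∧ Unimodal Q ∧
        r = leftQuantile Q (1 - α)}
      (μ + σ * if α ≤ 1 / 6 then √(2 / (9 * α))
        else if α ≤ 1 / 2 then √3 * (1 - 2 * α) else 0) := by
  have h_image : {r : ℝ | ∃ Q : Measure ℝ, MemH μ σ Q ∧ IsSymmetricDist Q ∧ Unimodal Q ∧
      r = leftQuantile Q (1 - α)}
      = (leftQuantile · (1 - α)) '' symmetricUnimodalClass μ σ := by
    ext r
    simp [symmetricUnimodalClass, and_assoc, eq_comm]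
  rw [h_image]
  split_ifs with h6 h2
  · exact (isGreatest_leftQuantile_of_le_one_sixth hσ ⟨hα.1, h6⟩).isLUB
  · rcases h2.lt_or_eq with h2 | rfl
    · exact (isGreatest_leftQuantile_of_one_sixth_le hσ ⟨(not_le.1 h6).le, h2⟩).isLUB
    · simpa using (isGreatest_leftQuantile_of_half_le (σ := σ) ⟨le_rfl, hα.2⟩).isLUB
  · simpa using (isGreatest_leftQuantile_of_half_le (σ := σ) ⟨(not_le.1 h2).le, hα.2⟩).isLUB

/-- for `α ∈ (0,1)`,
`sup_{Q ∈ H_US(0,1)} T^Q(1−α)` equals `√(2/(9α))` for `α ∈ (0,1/6]`,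
`√3 (1−2α)` for `α ∈ (1/6,1/2]`, and `0` for `α ∈ (1/2,1)`. -/
theorem stmt_14 (α : ℝ) (hα : α ∈ Ioo (0:ℝ) 1) :
    IsLUB {r : ℝ | ∃ Q : Measure ℝ, MemH 0 1 Q ∧ IsSymmetricDist Q ∧ Unimodal Q ∧
        r = leftQuantile Q (1 - α)}
      (if α ≤ 1/6 then Real.sqrt (2 / (9 * α))
        else if α ≤ 1/2 then Real.sqrt 3 * (1 - 2 * α) else 0) := by
  simpa using stmt_14_general (μ := 0) one_pos hα
end
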